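/- Every K_4-minor-free subcubic finite simple graph G satisfies R(G) ≤ 1, i.e., its median adjacency eigenvalues λ_h(G) and λ_l(G) (h = ⌊(n+1)/2⌋, l = ⌈(n+1)/2⌉) have absolute value at most 1. -/

import Mathlib

open SimpleGraph Matrix

theorem adjMatrix_isHermitian {V : Type} [Fintype V] [DecidableEq V]
    (G : SimpleGraph V) [DecidableRel G.Adj] : (G.adjMatrix ℝ).IsHermitian := by
  ext i j
  simp [Matrix.conjTranspose_apply, SimpleGraph.adj_comm]

/-- Multiset of adjacency eigenvalues. -/
noncomputable def adjSpectrum {V : Type} [Fintype V] [DecidableEq V]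
    (G : SimpleGraph V) [DecidableRel G.Adj] : Multiset ℝ :=
  Finset.univ.val.map (adjMatrix_isHermitian G).eigenvalues

/-- the i-th largest adjacency eigenvalue (1-indexed). -/
noncomputable def eigval {V : Type} [Fintype V] [DecidableEq V]
    (G : SimpleGraph V) [DecidableRel G.Adj] (i : ℕ) : ℝ :=
  ((adjSpectrum G).sort (· ≤ ·)).getD (Fintype.card V - i) 0

/-- `G` has a `K₄` minor: four nonempty, pairwise disjoint, connected branch sets,
each pair joined by an edge of `G`. -/
def HasK4Minor {V : Type} (G : SimpleGraph V) : Prop :=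
  ∃ B : Fin 4 → Set V,
    (∀ i, (B i).Nonempty) ∧
    (∀ i, (G.induce (B i)).Connected) ∧
    (Pairwise fun i j => Disjoint (B i) (B j)) ∧
    (∀ i j, i ≠ j → ∃ a ∈ B i, ∃ b ∈ B j, G.Adj a b)

/-!
Let `ε = ±1`. If `ε * (x ⬝ᵥ A *ᵥ x) ≤ x ⬝ᵥ x` on a subspace of codimension `k`, then at most `k`
eigenvalues `μ` satisfy `1 < ε * μ`; so it suffices to find such a subspace with `2 * k < n`, for
both signs. This is done by induction over vertex sets `U`, in the form `2 * k < #U`. For odd `#U`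
it is enough to let `x` vanish at one vertex. For even `#U`, requiring `x` to vanish on a cut `S`
splits the form into the forms of the two sides, at the price of `#S` equations, and the strict
inequality passes from the sides to `U` when `#S ≤ 1`, or when `#S = 2` and the sides have even
size.

A subcubic graph on at least five vertices without such a reducing cut has a `K₄` minor. Either
all degrees are at most two, and the neighbours of the ends of an edge form a reducing cut, or some
`v` has three neighbours. In the second case, since `U` has no reducing cut, no vertex `c` pairwise
separates the three neighbours of `v` in `U \ {v}` (a side of odd size becomes even when the cut
vertex `v` is traded for its only neighbour on that side, or when two such sides are united), and
this yields a triangle model rooted at the three neighbours. What remains are sets of at most two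
vertices, and four-vertex graphs spanned by a `K_{2,2}`, where one equation suffices.
-/

open scoped Finset

section RootedMinor

variable {V : Type*} {G : SimpleGraph V} {U W : Set V} {u v : V}

/-- `u` and `v` lie in the same component of the subgraph induced on `W`, phrased with walks of `G`
so that no vertex has to be coerced to a subtype. In particular both ends belong to `W`. -/
def ReachableIn (G : SimpleGraph V) (W : Set V) (u v : V) : Prop :=
  ∃ w : G.Walk u v, ∀ a ∈ w.support, a ∈ W

namespace ReachableIn

lemma refl (hu : u ∈ W) : ReachableIn G W u u :=
  ⟨.nil, by simpa using hu⟩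

lemma symm (h : ReachableIn G W u v) : ReachableIn G W v u :=
  let ⟨w, hw⟩ := h
  ⟨w.reverse, by simpa using hw⟩

lemma trans {b : V} (h : ReachableIn G W u v) (h' : ReachableIn G W v b) : ReachableIn G W u b := by
  obtain ⟨w, hw⟩ := h
  obtain ⟨w', hw'⟩ := h'
  exact ⟨w.append w', fun a ha => ((w.mem_support_append_iff w').1 ha).elim (hw a) (hw' a)⟩

lemma left_mem (h : ReachableIn G W u v) : u ∈ W :=
  let ⟨w, hw⟩ := h
  hw u w.start_mem_support

lemma right_mem (h : ReachableIn G W u v) : v ∈ W :=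
  h.symm.left_mem

lemma trans_adj {b : V} (h : ReachableIn G W u v) (hvb : G.Adj v b) (hb : b ∈ W) :
    ReachableIn G W u b := by
  refine h.trans ⟨hvb.toWalk, ?_⟩
  simp [h.right_mem, hb]

lemma exists_path (h : ReachableIn G W u v) :
    ∃ w : G.Walk u v, w.IsPath ∧ ∀ a ∈ w.support, a ∈ W := by
  classical
  obtain ⟨w, hw⟩ := h
  exact ⟨w.bypass, w.bypass_isPath, fun a ha => hw a (w.support_bypass_subset_support ha)⟩

lemma diff {X : Set V} (h : ReachableIn G W u v) (hX : ∀ a ∈ X, ¬ ReachableIn G W u a) :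
    ReachableIn G (W \ X) u v := by
  classical
  obtain ⟨w, hw⟩ := h
  exact ⟨w, fun a ha => ⟨hw a ha, fun haX => hX a haX
    ⟨w.takeUntil a ha, fun b hb => hw b (w.support_takeUntil_subset_support ha hb)⟩⟩⟩

lemma of_isolated {r : Fin 3 → V} {i j k a b : Fin 3} (h : ReachableIn G W (r i) (r j))
    (hij : i ≠ j) (hk : ∀ l ≠ k, ¬ ReachableIn G W (r k) (r l)) (hak : a ≠ k) (hbk : b ≠ k)
    (hab : a ≠ b) : ReachableIn G W (r a) (r b) := by
  have hik : i ≠ k := fun hik => hk j (hik ▸ hij.symm) (hik ▸ h)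
  have hjk : j ≠ k := fun hjk => hk i (hjk ▸ hij) (hjk ▸ h.symm)
  obtain ⟨rfl, rfl⟩ | ⟨rfl, rfl⟩ : i = a ∧ j = b ∨ i = b ∧ j = a := by lia
  exacts [h, h.symm]

lemma exists_adj_of_notMem {X : Set V} (h : ReachableIn G W u v) (hu : u ∈ X) (hv : v ∉ X) :
    ∃ a ∈ X, ∃ b ∈ W \ X, G.Adj a b := by
  obtain ⟨w, hw⟩ := h
  obtain ⟨d, hd, hfst, hsnd⟩ := w.exists_boundary_dart X hu hv
  exact ⟨d.fst, hfst, d.snd, ⟨hw _ (w.dart_snd_mem_support_of_mem_darts hd), hsnd⟩, d.adj⟩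

end ReachableIn

lemma induce_singleton_connected (G : SimpleGraph V) (v : V) : (G.induce {v}).Connected :=
  ⟨Preconnected.of_subsingleton⟩

lemma induce_insert_connected {X : Set V} (hX : (G.induce X).Connected) {a b : V} (ha : a ∈ X)
    (hab : G.Adj a b) : (G.induce (insert b X)).Connected :=
  Set.union_singleton ▸ connected_induce_union hX.preconnected
    (induce_singleton_connected G b).preconnected ha (Set.mem_singleton b) hab

/-- The branch sets `B` form a model inside `U` of the complete graph on `ι`, the branch set of `i`
containing the prescribed root `r i`. -/
structure IsRootedCliqueMinor {ι : Type*} (G : SimpleGraph V) (U : Set V) (r : ι → V)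
    (B : ι → Set V) : Prop where
  subset : ∀ i, B i ⊆ U
  root_mem : ∀ i, r i ∈ B i
  connected : ∀ i, (G.induce (B i)).Connected
  disjoint_adj : Pairwise fun i j => Disjoint (B i) (B j) ∧ ∃ a ∈ B i, ∃ b ∈ B j, G.Adj a b

lemma IsRootedCliqueMinor.hasK4Minor {V : Type} {G : SimpleGraph V} {U : Set V} {r : Fin 3 → V}
    {B : Fin 3 → Set V} (hB : IsRootedCliqueMinor G U r B) {v : V} (hv : v ∉ U)
    (hadj : ∀ i, G.Adj v (r i)) : HasK4Minor G := by
  have hvB (i : Fin 3) : v ∉ B i := fun h => hv (hB.subset i h)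
  refine ⟨Fin.cons {v} B, Fin.cases ⟨v, rfl⟩ fun i => ⟨r i, hB.root_mem i⟩,
    Fin.cases (induce_singleton_connected G v) hB.connected, ?_, ?_⟩
  · refine Fin.cases (Fin.cases (by simp) fun j _ => ?_) fun i =>
      Fin.cases (fun _ => ?_) fun j h => ?_
    · exact Set.disjoint_singleton_left.2 (hvB j)
    · exact Set.disjoint_singleton_right.2 (hvB i)
    · exact (hB.disjoint_adj (ne_of_apply_ne Fin.succ h)).1
  · refine Fin.cases (Fin.cases (by simp) fun j _ => ?_) fun i =>
      Fin.cases (fun _ => ?_) fun j h => ?_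
    · exact ⟨v, rfl, r j, hB.root_mem j, hadj j⟩
    · exact ⟨r i, hB.root_mem i, v, rfl, (hadj i).symm⟩
    · exact (hB.disjoint_adj (ne_of_apply_ne Fin.succ h)).2

lemma exists_connected_split_of_isPath {N : Set V} {y z : V} (w : G.Walk y z) (hw : w.IsPath)
    (hN : ({u | u ∈ w.support} ∩ N).Nontrivial) :
    ∃ Y Z : Set V, Y ∪ Z ⊆ {u | u ∈ w.support} ∧ y ∈ Y ∧ z ∈ Z ∧
      (G.induce Y).Connected ∧ (G.induce Z).Connected ∧ Disjoint Y Z ∧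
      (∃ a ∈ Y, ∃ b ∈ Z, G.Adj a b) ∧ (Y ∩ N).Nonempty ∧ (Z ∩ N).Nonempty := by
  induction w with
  | nil => exact absurd hN (by simp [Set.not_nontrivial_iff, Set.Subsingleton])
  | @cons y y' z hadj w ih =>
    rw [Walk.cons_isPath_iff] at hw
    by_cases hyN : y ∈ N
    · obtain ⟨q, ⟨hq, hqN⟩, hqy⟩ := hN.exists_ne y
      refine ⟨{y}, {u | u ∈ w.support}, by simp [Set.subset_def], rfl, w.end_mem_support,
        induce_singleton_connected G y, w.connected_induce_support,
        Set.disjoint_singleton_left.2 hw.2, ⟨y, rfl, y', w.start_mem_support, hadj⟩,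
        ⟨y, rfl, hyN⟩, ⟨q, ?_, hqN⟩⟩
      simpa [hqy] using hq
    · have hN' : {u | u ∈ (Walk.cons hadj w).support} ∩ N = {u | u ∈ w.support} ∩ N := by
        ext u
        simp only [Walk.support_cons, List.mem_cons, Set.mem_inter_iff, Set.mem_ofPred_eq]
        grind
      obtain ⟨Y, Z, hYZ, hy', hz, hYc, hZc, hdisj, ⟨a, ha, b, hb, hab⟩, hYN, hZN⟩ :=
        ih hw.1 (hN' ▸ hN)
      have hyZ : y ∉ Z := fun h => hw.2 (hYZ (.inr h))
      refine ⟨insert y Y, Z, ?_, Set.mem_insert y Y, hz, induce_insert_connected hYc hy' hadj.symm,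
        hZc, Set.disjoint_insert_left.2 ⟨hyZ, hdisj⟩, ⟨a, .inr ha, b, hb, hab⟩,
        hYN.mono (Set.inter_subset_inter_left N (Set.subset_insert y Y)), hZN⟩
      simp only [Set.subset_def, Set.mem_union, Set.mem_insert_iff, Set.mem_ofPred_eq,
        Walk.support_cons, List.mem_cons] at hYZ ⊢
      grind

/-- The neighbours of `X` in `U \ X`. -/
def attachments (G : SimpleGraph V) (U X : Set V) : Set V :=
  {p ∈ U \ X | ∃ a ∈ X, G.Adj a p}

/-- Were `p` the only attachment, `X` would be a union of components of `U \ {p}`; the pair joined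
there could then only be `r 1, r 2`, by a walk avoiding `insert p X`. -/
lemma attachments_nontrivial {X : Set V} {r : Fin 3 → V} (hr : ∀ i, r i ∈ U) (h0 : r 0 ∈ X)
    (h1 : r 1 ∉ X) (h2 : r 2 ∉ X)
    (h : ∀ c ∈ U, ∃ i j, i ≠ j ∧ ReachableIn G (U \ {c}) (r i) (r j))
    (hmax : ∀ p ∈ attachments G U X, ¬ ReachableIn G (U \ insert p X) (r 1) (r 2)) :
    (attachments G U X).Nontrivial := by
  obtain ⟨p, hp⟩ : (attachments G U X).Nonempty := by
    obtain ⟨i, j, hij, hreach⟩ := h (r 1) (hr 1)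
    have h02 : ReachableIn G (U \ {r 1}) (r 0) (r 2) :=
      hreach.of_isolated (k := 1) hij (fun _ _ hl => hl.left_mem.2 rfl) (by simp) (by simp)
        (by simp)
    obtain ⟨a, ha, p, ⟨⟨hpU, -⟩, hpX⟩, hap⟩ := h02.exists_adj_of_notMem h0 h2
    exact ⟨p, ⟨hpU, hpX⟩, a, ha, hap⟩
  by_contra hsub
  rw [Set.not_nontrivial_iff] at hsub
  have hclosed {u v : V} (huv : ReachableIn G (U \ {p}) u v) (hu : u ∈ X) : v ∈ X := by
    by_contra hv
    obtain ⟨a, ha, b, ⟨⟨hbU, hbp⟩, hbX⟩, hab⟩ := huv.exists_adj_of_notMem hu hv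
    exact hbp (hsub ⟨⟨hbU, hbX⟩, a, ha, hab⟩ hp)
  obtain ⟨i, j, hij, hreach⟩ := h p hp.1.1
  have hisolated : ∀ l ≠ 0, ¬ ReachableIn G (U \ {p}) (r 0) (r l) := by
    intro l hl hreach
    have hlX := hclosed hreach h0
    fin_cases l <;> simp_all
  have h12 : ReachableIn G (U \ {p}) (r 1) (r 2) :=
    hreach.of_isolated hij hisolated (by simp) (by simp) (by simp)
  refine hmax p hp ?_
  rw [Set.insert_eq, ← Set.sdiff_sdiff]
  exact h12.diff fun a ha h1a => h1 (hclosed h1a.symm ha)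

lemma exists_maximal_branchSet (hU : U.Finite) {r : Fin 3 → V} (hr : r 0 ∈ U)
    (h : ∃ i j, i ≠ j ∧ ReachableIn G (U \ {r 0}) (r i) (r j)) :
    ∃ X ⊆ U, (G.induce X).Connected ∧ r 0 ∈ X ∧ ReachableIn G (U \ X) (r 1) (r 2) ∧
      ∀ p ∈ attachments G U X, ¬ ReachableIn G (U \ insert p X) (r 1) (r 2) := by
  let P (X : Set V) : Prop :=
    (G.induce X).Connected ∧ r 0 ∈ X ∧ ReachableIn G (U \ X) (r 1) (r 2)
  have hfin : {X | X ⊆ U ∧ P X}.Finite := hU.finite_subsets.subset fun X hX => hX.1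
  have hstart : {r 0} ⊆ U ∧ P {r 0} := by
    obtain ⟨i, j, hij, hreach⟩ := h
    exact ⟨by simpa using hr, induce_singleton_connected G (r 0), rfl,
      hreach.of_isolated (k := 0) hij (fun _ _ hl => hl.left_mem.2 rfl) (by simp) (by simp)
        (by simp)⟩
  obtain ⟨X, -, ⟨hXU, hXconn, h0, h12⟩, hXmax⟩ := hfin.exists_le_maximal hstart
  refine ⟨X, hXU, hXconn, h0, h12, ?_⟩
  rintro p ⟨⟨hpU, hpX⟩, a, ha, hap⟩ hreach
  exact hpX (hXmax ⟨Set.insert_subset hpU hXU, induce_insert_connected hXconn ha hap,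
    .inr h0, hreach⟩ (Set.subset_insert p X) (Set.mem_insert p X))

/-- The branch set of `r 0` is a maximal connected set `X` leaving `r 1` and `r 2` joined in
`U \ X`. By maximality every path joining them passes through all attachments of `X`; there are at
least two, so the path can be cut between them. -/
theorem exists_isRootedCliqueMinor (hU : U.Finite) {r : Fin 3 → V} (hr : ∀ i, r i ∈ U)
    (h : ∀ c ∈ U, ∃ i j, i ≠ j ∧ ReachableIn G (U \ {c}) (r i) (r j)) :
    ∃ B, IsRootedCliqueMinor G U r B := by
  obtain ⟨X, hXU, hXconn, h0, h12, hmax⟩ := exists_maximal_branchSet hU (hr 0) (h _ (hr 0))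
  have hattach := attachments_nontrivial hr h0 h12.left_mem.2 h12.right_mem.2 h hmax
  obtain ⟨w, hw, hwU⟩ := h12.exists_path
  have hsupp : attachments G U X ⊆ {u | u ∈ w.support} := by
    intro p hp
    by_contra hpw
    refine hmax p hp ⟨w, fun a ha => ⟨(hwU a ha).1, ?_⟩⟩
    rintro (rfl | haX)
    exacts [hpw ha, (hwU a ha).2 haX]
  obtain ⟨Y, Z, hYZ, h1, h2, hYconn, hZconn, hdisj, hadj, ⟨p, hpY, -, a, ha, hap⟩,
    ⟨q, hqZ, -, b, hb, hbq⟩⟩ := exists_connected_split_of_isPath w hw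
      (hattach.mono (Set.subset_inter hsupp subset_rfl))
  have hYU : Y ⊆ U \ X := fun u hu => hwU u (hYZ (.inl hu))
  have hZU : Z ⊆ U \ X := fun u hu => hwU u (hYZ (.inr hu))
  have hsymm : Std.Symm fun S T : Set V => Disjoint S T ∧ ∃ a ∈ S, ∃ b ∈ T, G.Adj a b :=
    ⟨fun _ _ ⟨hST, a, ha, b, hb, hab⟩ => ⟨hST.symm, b, hb, a, ha, hab.symm⟩⟩
  refine ⟨![X, Y, Z], ?_, ?_, ?_, ?_⟩
  · simp [Fin.forall_fin_succ, hXU, hYU.trans Set.sdiff_subset, hZU.trans Set.sdiff_subset]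
  · simp [Fin.forall_fin_succ, h0, h1, h2]
  · simp [Fin.forall_fin_succ, hXconn, hYconn, hZconn]
  · refine (@Std.Symm.pairwise_on _ _ _ _ hsymm ![X, Y, Z]).2 ?_
    have hXY : Disjoint X Y := (Set.disjoint_of_subset_left hYU Set.disjoint_sdiff_left).symm
    have hXZ : Disjoint X Z := (Set.disjoint_of_subset_left hZU Set.disjoint_sdiff_left).symm
    have hXYadj : ∃ a ∈ X, ∃ b ∈ Y, G.Adj a b := ⟨a, ha, p, hpY, hap⟩
    have hXZadj : ∃ a ∈ X, ∃ b ∈ Z, G.Adj a b := ⟨b, hb, q, hqZ, hbq⟩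
    simp [Fin.forall_fin_succ, hXY, hXZ, hdisj, hXYadj, hXZadj, hadj]

end RootedMinor

section Separation

variable {V : Type*} {G : SimpleGraph V} {U S C T W : Finset V} {v x y z : V}

open Classical in
/-- The vertex set of the component of `y` in the graph induced on `W`, and `∅` if `y ∉ W`. -/
noncomputable def reachFinset (G : SimpleGraph V) (W : Finset V) (y : V) : Finset V :=
  {u ∈ W | ReachableIn G W y u}

lemma mem_reachFinset : z ∈ reachFinset G W y ↔ ReachableIn G W y z := by
  simpa [reachFinset] using fun h : ReachableIn G W y z => h.right_mem

variable [DecidableEq V]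

/-- Deleting `S` from the graph induced on `U` disconnects it, and `C` is one side of the resulting
separation: a nonempty proper union of components of `U \ S`. -/
structure IsSeparation (G : SimpleGraph V) (U S C : Finset V) : Prop where
  subset : S ⊆ U
  nonempty : C.Nonempty
  ssubset : C ⊂ U \ S
  closed : ∀ a ∈ C, ∀ b ∈ U \ S, G.Adj a b → b ∈ C

/-- `U` admits one of the separations through which a bound `2 * k < #U` is inherited from the two
sides: a cut of at most one vertex, or a cut of two vertices with a side of even size. -/
def HasReducingSeparation (G : SimpleGraph V) (U : Finset V) : Prop :=
  ∃ S C, IsSeparation G U S C ∧ (#S ≤ 1 ∨ #S ≤ 2 ∧ Even #C)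

namespace IsSeparation

lemma of_card_lt (hS : S ⊆ U) (hC : C ⊆ U) (hne : C.Nonempty) (hdisj : Disjoint C S)
    (hadj : ∀ a ∈ C, ∀ b ∈ U, G.Adj a b → b ∈ C ∪ S) (hcard : #C + #S < #U) :
    IsSeparation G U S C where
  subset := hS
  nonempty := hne
  ssubset := by
    refine Finset.ssubset_iff_subset_ne.2 ⟨Finset.subset_sdiff.2 ⟨hC, hdisj⟩, ?_⟩
    rintro rfl
    exact hcard.ne (Finset.card_sdiff_add_card_eq_card hS)
  closed a ha b hb hab := by
    rw [Finset.mem_sdiff] at hb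
    exact (Finset.mem_union.1 (hadj a ha b hb.1 hab)).resolve_right hb.2

lemma symm (h : IsSeparation G U S C) : IsSeparation G U S ((U \ S) \ C) where
  subset := h.subset
  nonempty := Finset.sdiff_nonempty.2 h.ssubset.2
  ssubset := Finset.sdiff_ssubset h.ssubset.1 h.nonempty
  closed a ha b hb hab := by
    rw [Finset.mem_sdiff] at ha ⊢
    exact ⟨hb, fun hbC => ha.2 (h.closed b hbC a ha.1 hab.symm)⟩

lemma card_add_card_add_card (h : IsSeparation G U S C) : #S + #C + #((U \ S) \ C) = #U := by
  have hC := Finset.card_sdiff_add_card_eq_card h.ssubset.1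
  have hS := Finset.card_sdiff_add_card_eq_card h.subset
  lia

lemma union (hC : IsSeparation G U S C) (hT : IsSeparation G U S T) (hz : z ∈ U \ S)
    (hzC : z ∉ C) (hzT : z ∉ T) : IsSeparation G U S (C ∪ T) where
  subset := hC.subset
  nonempty := hC.nonempty.inl
  ssubset := by
    refine (Finset.ssubset_iff_of_subset (Finset.union_subset hC.ssubset.1 hT.ssubset.1)).2 ?_
    exact ⟨z, hz, by simp [hzC, hzT]⟩
  closed a ha b hb hab := by
    rw [Finset.mem_union] at ha ⊢
    exact ha.imp (hC.closed a · b hb hab) (hT.closed a · b hb hab)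

/-- Trades the cut vertex `v` for its only neighbour in `C`, changing the parity of `#C`. -/
lemma shift (h : IsSeparation G U (insert v S) C) (hv : v ∉ S) (hy : y ∈ C) (hC : 1 < #C)
    (hadj : ∀ u ∈ C, G.Adj v u → u = y) : IsSeparation G U (insert y S) (C.erase y) where
  subset := by
    have hyU := (Finset.mem_sdiff.1 (h.ssubset.1 hy)).1
    exact Finset.insert_subset hyU ((Finset.subset_insert v S).trans h.subset)
  nonempty := (Finset.one_lt_card_iff_nontrivial.1 hC).erase_nonempty
  ssubset := by
    have hvU : v ∈ U := h.subset (Finset.mem_insert_self v S)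
    have hCU := h.ssubset.1
    refine (Finset.ssubset_iff_of_subset fun u hu => ?_).2 ⟨v, ?_, fun hvC => ?_⟩ <;> grind
  closed a ha b hb hab := by
    have hclosed := h.closed a (Finset.mem_of_mem_erase ha) b
    have hav : b = v → a = y := fun hbv => hadj a (Finset.mem_of_mem_erase ha) (hbv ▸ hab.symm)
    grind

lemma card_le_one_of_adj_unique (h : IsSeparation G U (insert v S) C) (hS : #S ≤ 1) (hv : v ∉ S)
    (hy : y ∈ C) (hadj : ∀ u ∈ C, G.Adj v u → u = y) (hU : ¬ HasReducingSeparation G U) :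
    #C ≤ 1 := by
  by_contra! hC
  have hcut (a : V) : #(insert a S) ≤ 2 := (Finset.card_insert_le a S).trans (by lia)
  have hodd : ¬ Even #C := fun heven => hU ⟨_, _, h, .inr ⟨hcut v, heven⟩⟩
  have hodd' : ¬ Even #(C.erase y) := fun heven =>
    hU ⟨_, _, h.shift hv hy hC hadj, .inr ⟨hcut y, heven⟩⟩
  rw [Finset.card_erase_of_mem hy] at hodd'
  grind

end IsSeparation

lemma isSeparation_reachFinset (hS : S ⊆ U) (hy : y ∈ U \ S) (hz : z ∈ U \ S)
    (h : ¬ ReachableIn G ↑(U \ S) y z) : IsSeparation G U S (reachFinset G (U \ S) y) where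
  subset := hS
  nonempty := ⟨y, mem_reachFinset.2 (.refl hy)⟩
  ssubset := (Finset.ssubset_iff_of_subset fun _ hu => (mem_reachFinset.1 hu).right_mem).2
    ⟨z, hz, fun hzy => h (mem_reachFinset.1 hzy)⟩
  closed _ ha _ hb hab := mem_reachFinset.2 ((mem_reachFinset.1 ha).trans_adj hab hb)

lemma reachableIn_of_not_hasReducingSeparation (hU : ¬ HasReducingSeparation G U) (hcard : 5 ≤ #U)
    (hv : v ∈ U) (hx : x ∈ U) (hvx : v ≠ x) (hy : y ∈ U \ {v, x}) (hz : z ∈ U \ {v, x})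
    (hadj : ∀ u ∈ U, G.Adj v u → u = x ∨ u = y ∨ u = z) : ReachableIn G ↑(U \ {v, x}) y z := by
  by_contra h
  have hsep := isSeparation_reachFinset (Finset.insert_subset hv (by simpa using hx)) hy hz h
  have hyC : y ∈ reachFinset G (U \ {v, x}) y := mem_reachFinset.2 (.refl hy)
  have hzC : z ∉ reachFinset G (U \ {v, x}) y := fun hz => h (mem_reachFinset.1 hz)
  have hle := hsep.card_le_one_of_adj_unique (by simp) (by simpa using hvx) hyC ?_ hU
  · have hle' := hsep.symm.card_le_one_of_adj_unique (by simp) (by simpa using hvx)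
      (Finset.mem_sdiff.2 ⟨hz, hzC⟩) ?_ hU
    · have hsum := hsep.card_add_card_add_card
      rw [Finset.card_pair hvx] at hsum
      lia
    · intro u hu hvu
      have := hadj u
      grind
  · intro u hu hvu
    have := hadj u
    have := hsep.ssubset.1 hu
    grind

/-- Otherwise the components of `r 0` and `r 1` have odd size, and their union, which misses `r 2`,
has even size. -/
lemma exists_reachableIn_of_not_hasReducingSeparation (hU : ¬ HasReducingSeparation G U)
    (hS : S ⊆ U) (hcard : #S ≤ 2) {r : Fin 3 → V} (hr : ∀ i, r i ∈ U \ S) :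
    ∃ i j, i ≠ j ∧ ReachableIn G ↑(U \ S) (r i) (r j) := by
  by_contra! h
  let C (i : Fin 3) : Finset V := reachFinset G (U \ S) (r i)
  have hmem {i j : Fin 3} (hij : i ≠ j) : r j ∉ C i := fun hj => h i j hij (mem_reachFinset.1 hj)
  have hsep {i j : Fin 3} (hij : i ≠ j) : IsSeparation G U S (C i) :=
    isSeparation_reachFinset hS (hr i) (hr j) (h i j hij)
  have hodd {T : Finset V} (hT : IsSeparation G U S T) : ¬ Even #T :=
    fun heven => hU ⟨S, T, hT, .inr ⟨hcard, heven⟩⟩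
  have h01 : (0 : Fin 3) ≠ 1 := by decide
  have h02 : (0 : Fin 3) ≠ 2 := by decide
  have h12 : (1 : Fin 3) ≠ 2 := by decide
  have hdisj : Disjoint (C 0) (C 1) := Finset.disjoint_left.2 fun u hu0 hu1 =>
    h 0 1 h01 ((mem_reachFinset.1 hu0).trans (mem_reachFinset.1 hu1).symm)
  have hunion := hodd ((hsep h02).union (hsep h12) (hr 2) (hmem h02) (hmem h12))
  rw [Finset.card_union_of_disjoint hdisj, Nat.even_add] at hunion
  exact hunion (iff_of_false (hodd (hsep h02)) (hodd (hsep h12)))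

lemma exists_reachableIn_of_adj_imp_exists_eq (hU : ¬ HasReducingSeparation G U) (hcard : 5 ≤ #U)
    (hv : v ∈ U) {r : Fin 3 → V} (hinj : r.Injective) (hr : ∀ i, r i ∈ U.erase v)
    (hadj : ∀ u ∈ U, G.Adj v u → ∃ i, u = r i) {c : V} (hc : c ∈ U.erase v) :
    ∃ i j, i ≠ j ∧ ReachableIn G ↑(U \ {v, c}) (r i) (r j) := by
  obtain ⟨hcv, hcU⟩ := Finset.mem_erase.1 hc
  have hmem {i : Fin 3} (hi : r i ≠ c) : r i ∈ U \ {v, c} := by grind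
  by_cases hck : ∃ k, r k = c
  · obtain ⟨k, rfl⟩ := hck
    obtain ⟨i, j, hij, hik, hjk, hall⟩ :
        ∃ i j, i ≠ j ∧ i ≠ k ∧ j ≠ k ∧ ∀ l, l = k ∨ l = i ∨ l = j := by
      clear * -
      decide +revert
    refine ⟨i, j, hij, reachableIn_of_not_hasReducingSeparation hU hcard hv hcU hcv.symm
      (hmem (hinj.ne hik)) (hmem (hinj.ne hjk)) fun u hu hvu => ?_⟩
    obtain ⟨l, rfl⟩ := hadj u hu hvu
    simpa only [hinj.eq_iff] using hall l
  · push Not at hck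
    exact exists_reachableIn_of_not_hasReducingSeparation hU
      (Finset.insert_subset hv (Finset.singleton_subset_iff.2 hcU)) Finset.card_le_two
      fun i => hmem (hck i)

section Degree

variable [DecidableRel G.Adj]

lemma two_le_card_neighbors (hU : ¬ HasReducingSeparation G U) (hcard : 3 ≤ #U) (hv : v ∈ U) :
    2 ≤ #{u ∈ U | G.Adj v u} := by
  by_contra! hlt
  refine hU ⟨{u ∈ U | G.Adj v u}, {v}, .of_card_lt (Finset.filter_subset _ U) (by simpa using hv)
    (Finset.singleton_nonempty v) (by simp) ?_ ?_, .inl (by lia)⟩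
  · simp +contextual
  · rw [Finset.card_singleton]
    lia

lemma hasReducingSeparation_of_card_neighbors_le_two (hcard : 5 ≤ #U)
    (hdeg : ∀ v ∈ U, #{u ∈ U | G.Adj v u} ≤ 2) : HasReducingSeparation G U := by
  by_contra hU
  obtain ⟨x, hx⟩ : U.Nonempty := Finset.card_pos.1 (by lia)
  obtain ⟨y, hy⟩ : Finset.Nonempty {u ∈ U | G.Adj x u} :=
    Finset.card_pos.1 (two_pos.trans_le (two_le_card_neighbors hU (by lia) hx))
  obtain ⟨hyU, hxy⟩ := Finset.mem_filter.1 hy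
  let N (v : V) : Finset V := {u ∈ U | G.Adj v u}
  let S : Finset V := (N x).erase y ∪ (N y).erase x
  have hx' : x ∈ N y := Finset.mem_filter.2 ⟨hx, hxy.symm⟩
  have hS : #S ≤ 2 := by
    refine (Finset.card_union_le _ _).trans ?_
    rw [Finset.card_erase_of_mem hy, Finset.card_erase_of_mem hx']
    have := hdeg x hx
    have := hdeg y hyU
    lia
  have hpair : #{x, y} = 2 := Finset.card_pair hxy.ne
  refine hU ⟨S, {x, y}, .of_card_lt ?_ ?_ (by simp) ?_ ?_ (by lia), .inr ⟨hS, by simp [hpair]⟩⟩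
  · grind
  · grind
  · simp [S, N]
  · grind

end Degree

lemma exists_card_eq_two_forall_adj (hU : ¬ HasReducingSeparation G U) (hcard : #U = 4) :
    ∃ P ⊆ U, #P = 2 ∧ ∀ a ∈ P, ∀ b ∈ U \ P, G.Adj a b := by
  classical
  by_cases hclique : ∀ a ∈ U, ∀ b ∈ U, a ≠ b → G.Adj a b
  · obtain ⟨P, hPU, hP⟩ := Finset.exists_subset_card_eq (show 2 ≤ #U by lia)
    refine ⟨P, hPU, hP, fun a ha b hb => ?_⟩
    obtain ⟨hbU, hbP⟩ := Finset.mem_sdiff.1 hb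
    exact hclique a (hPU ha) b hbU (ne_of_mem_of_not_mem ha hbP)
  · push Not at hclique
    obtain ⟨a, ha, c, hc, hac, hnadj⟩ := hclique
    have hPU : {a, c} ⊆ U := Finset.insert_subset ha (by simpa using hc)
    have hP : #{a, c} = 2 := Finset.card_pair hac
    refine ⟨{a, c}, hPU, hP, fun v hv b hb => ?_⟩
    have hN : ({u ∈ U | G.Adj v u} : Finset V) = U \ {a, c} := by
      refine Finset.eq_of_subset_of_card_le (fun u hu => ?_) ?_
      · have := hnadj ∘ SimpleGraph.Adj.symm
        grind [SimpleGraph.irrefl]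
      · rw [Finset.card_sdiff_of_subset hPU, hP, hcard]
        exact two_le_card_neighbors hU (by lia) (hPU hv)
    exact (Finset.mem_filter.1 (hN ▸ hb)).2

end Separation

section KFour

variable {V : Type} [DecidableEq V] {G : SimpleGraph V} [DecidableRel G.Adj] {U : Finset V} {v : V}

lemma hasK4Minor_of_card_neighbors_eq_three (hU : ¬ HasReducingSeparation G U) (hcard : 5 ≤ #U)
    (hv : v ∈ U) (hdeg : #{u ∈ U | G.Adj v u} = 3) : HasK4Minor G := by
  let e := Finset.equivFinOfCardEq hdeg
  let r (i : Fin 3) : V := e.symm i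
  have hinj : r.Injective := Subtype.val_injective.comp e.symm.injective
  have hr (i : Fin 3) : r i ∈ U ∧ G.Adj v (r i) := Finset.mem_filter.1 (e.symm i).2
  have hmem (i : Fin 3) : r i ∈ U.erase v := Finset.mem_erase.2 ⟨(hr i).2.ne', (hr i).1⟩
  have hrange : ∀ u ∈ U, G.Adj v u → ∃ i, u = r i := fun u hu hvu =>
    ⟨e ⟨u, Finset.mem_filter.2 ⟨hu, hvu⟩⟩, by simp [r]⟩
  obtain ⟨B, hB⟩ := exists_isRootedCliqueMinor (G := G) (U.erase v).finite_toSet hmem fun c hc => by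
    have herase : (↑(U.erase v) : Set V) \ {c} = ↑(U \ {v, c}) := by
      rw [Finset.coe_erase, Finset.coe_sdiff, Finset.coe_pair, Set.sdiff_sdiff, Set.singleton_union]
    rw [herase]
    exact exists_reachableIn_of_adj_imp_exists_eq hU hcard hv hinj hmem hrange hc
  exact hB.hasK4Minor (by simp) fun i => (hr i).2

theorem hasReducingSeparation_of_not_hasK4Minor (hK4 : ¬ HasK4Minor G)
    (hdeg : ∀ v ∈ U, #{u ∈ U | G.Adj v u} ≤ 3) (hcard : 5 ≤ #U) : HasReducingSeparation G U := by
  by_contra hU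
  by_cases h : ∃ v ∈ U, #{u ∈ U | G.Adj v u} = 3
  · obtain ⟨v, hv, hv3⟩ := h
    exact hK4 (hasK4Minor_of_card_neighbors_eq_three hU hcard hv hv3)
  · push Not at h
    exact hU (hasReducingSeparation_of_card_neighbors_le_two hcard fun v hv => by
      have := hdeg v hv
      have := h v hv
      lia)

end KFour

section Form

variable {V : Type*} {G : SimpleGraph V} [DecidableRel G.Adj] {ε : ℝ} {U S T C : Finset V}
  {k l : ℕ}

/-- The quadratic form of the adjacency matrix of the graph induced on `U`. -/
def adjForm (G : SimpleGraph V) [DecidableRel G.Adj] (U : Finset V) (x : V → ℝ) : ℝ :=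
  ∑ u ∈ U, ∑ v ∈ U, if G.Adj u v then x u * x v else 0

/-- `ε` times the quadratic form of `G` on `U` is bounded by the squared norm on a subspace of
codimension at most `k`, the subspace being encoded by `k` linear equations. -/
def FormBoundedInCodim (G : SimpleGraph V) [DecidableRel G.Adj] (ε : ℝ) (U : Finset V) (k : ℕ) :
    Prop :=
  ∃ L : Finset (Module.Dual ℝ (V → ℝ)), #L ≤ k ∧
    ∀ x, (∀ f ∈ L, f x = 0) → ε * adjForm G U x ≤ ∑ u ∈ U, x u ^ 2

lemma adjForm_pair [DecidableEq V] {a b : V} (hab : a ≠ b) (x : V → ℝ) :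
    adjForm G {a, b} x = if G.Adj a b then 2 * (x a * x b) else 0 := by
  simp only [adjForm, Finset.sum_pair hab, SimpleGraph.irrefl, if_false, G.adj_comm b a]
  split_ifs <;> ring

lemma adjForm_union [DecidableEq V] (hST : Disjoint S T) (x : V → ℝ) :
    adjForm G (S ∪ T) x = adjForm G S x + adjForm G T x +
      2 * ∑ u ∈ S, ∑ v ∈ T, if G.Adj u v then x u * x v else 0 := by
  have hcomm : (∑ u ∈ T, ∑ v ∈ S, if G.Adj u v then x u * x v else 0) =
      ∑ u ∈ S, ∑ v ∈ T, if G.Adj u v then x u * x v else 0 := by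
    rw [Finset.sum_comm]
    simp only [G.adj_comm, mul_comm]
  simp only [adjForm, Finset.sum_union hST, Finset.sum_add_distrib, hcomm]
  ring

lemma adjForm_sdiff [DecidableEq V] {x : V → ℝ} (hx : ∀ u ∈ S, x u = 0) :
    adjForm G (U \ S) x = adjForm G U x := by
  have hzero {u : V} (huU : u ∈ U) (hu : u ∉ U \ S) : x u = 0 :=
    hx u (by simpa [huU] using hu)
  unfold adjForm
  rw [Finset.sum_subset Finset.sdiff_subset fun u huU hu => ?_]
  · refine Finset.sum_congr rfl fun u _ =>
      Finset.sum_subset Finset.sdiff_subset fun v hvU hv => ?_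
    simp [hzero hvU hv]
  · simp [hzero huU hu]

lemma formBoundedInCodim_zero_of_card_le_two (hε : |ε| ≤ 1) (hU : #U ≤ 2) :
    FormBoundedInCodim G ε U 0 := by
  classical
  refine ⟨∅, le_rfl, fun x _ => ?_⟩
  obtain h0 | h1 | h2 : #U = 0 ∨ #U = 1 ∨ #U = 2 := by lia
  · simp [Finset.card_eq_zero.1 h0, adjForm]
  · obtain ⟨a, rfl⟩ := Finset.card_eq_one.1 h1
    simp [adjForm, sq_nonneg]
  · obtain ⟨a, b, hab, rfl⟩ := Finset.card_eq_two.1 h2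
    rw [adjForm_pair hab, Finset.sum_pair hab]
    obtain ⟨hε₁, hε₂⟩ := abs_le.1 hε
    split_ifs
    · nlinarith [mul_nonneg (sub_nonneg.2 hε₂) (sq_nonneg (x a - x b)),
        mul_nonneg (neg_le_iff_add_nonneg.1 hε₁) (sq_nonneg (x a + x b)),
        sq_nonneg (x a - x b), sq_nonneg (x a + x b)]
    · rw [mul_zero]
      positivity

namespace FormBoundedInCodim

variable [DecidableEq V]

lemma of_sdiff (h : FormBoundedInCodim G ε (U \ S) k) : FormBoundedInCodim G ε U (#S + k) := by
  classical
  obtain ⟨L, hL, hbound⟩ := h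
  refine ⟨S.image LinearMap.proj ∪ L, (Finset.card_union_le _ _).trans
    (add_le_add Finset.card_image_le hL), fun x hx => ?_⟩
  have hxS : ∀ u ∈ S, x u = 0 := fun u hu =>
    hx (LinearMap.proj u) (Finset.mem_union_left L (Finset.mem_image_of_mem _ hu))
  rw [← adjForm_sdiff hxS]
  exact (hbound x fun f hf => hx f (Finset.mem_union_right _ hf)).trans
    (Finset.sum_le_sum_of_subset_of_nonneg Finset.sdiff_subset fun u _ _ => sq_nonneg (x u))

lemma union_of_not_adj (hS : FormBoundedInCodim G ε S k) (hT : FormBoundedInCodim G ε T l)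
    (hST : Disjoint S T) (hadj : ∀ a ∈ S, ∀ b ∈ T, ¬ G.Adj a b) :
    FormBoundedInCodim G ε (S ∪ T) (k + l) := by
  classical
  obtain ⟨L, hL, hboundS⟩ := hS
  obtain ⟨M, hM, hboundT⟩ := hT
  refine ⟨L ∪ M, (Finset.card_union_le L M).trans (add_le_add hL hM), fun x hx => ?_⟩
  have hcross : (∑ a ∈ S, ∑ b ∈ T, if G.Adj a b then x a * x b else 0) = 0 :=
    Finset.sum_eq_zero fun a ha => Finset.sum_eq_zero fun b hb => if_neg (hadj a ha b hb)
  rw [adjForm_union hST, hcross, Finset.sum_union hST]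
  linarith [hboundS x fun f hf => hx f (Finset.mem_union_left M hf),
    hboundT x fun f hf => hx f (Finset.mem_union_right L hf)]

/-- Where `∑ a ∈ S, x a = -ε * ∑ b ∈ T, x b`, the edges between `S` and `T` contribute
`-2 * (ε * ∑ b ∈ T, x b) ^ 2`. -/
lemma union_of_forall_adj (hS : FormBoundedInCodim G ε S k) (hT : FormBoundedInCodim G ε T l)
    (hST : Disjoint S T) (hadj : ∀ a ∈ S, ∀ b ∈ T, G.Adj a b) :
    FormBoundedInCodim G ε (S ∪ T) (k + l + 1) := by
  classical
  obtain ⟨L, hL, hboundS⟩ := hS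
  obtain ⟨M, hM, hboundT⟩ := hT
  let f : Module.Dual ℝ (V → ℝ) :=
    ∑ a ∈ S, LinearMap.proj a + ε • ∑ b ∈ T, LinearMap.proj b
  refine ⟨insert f (L ∪ M), (Finset.card_insert_le _ _).trans
    (Nat.succ_le_succ ((Finset.card_union_le L M).trans (add_le_add hL hM))), fun x hx => ?_⟩
  have hf : ∑ a ∈ S, x a + ε * ∑ b ∈ T, x b = 0 := by
    simpa [f] using hx f (Finset.mem_insert_self f _)
  have hcross : (∑ a ∈ S, ∑ b ∈ T, if G.Adj a b then x a * x b else 0) =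
      (∑ a ∈ S, x a) * ∑ b ∈ T, x b := by
    rw [Finset.sum_mul_sum]
    exact Finset.sum_congr rfl fun a ha => Finset.sum_congr rfl fun b hb => if_pos (hadj a ha b hb)
  rw [adjForm_union hST, hcross, Finset.sum_union hST, eq_neg_of_add_eq_zero_left hf]
  nlinarith [hboundS x fun f hf => hx f (Finset.mem_insert_of_mem (Finset.mem_union_left M hf)),
    hboundT x fun f hf => hx f (Finset.mem_insert_of_mem (Finset.mem_union_right L hf)),
    sq_nonneg (ε * ∑ b ∈ T, x b)]

end FormBoundedInCodim

variable [DecidableEq V]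

lemma IsSeparation.formBoundedInCodim (h : IsSeparation G U S C)
    (hC : FormBoundedInCodim G ε C k) (hD : FormBoundedInCodim G ε ((U \ S) \ C) l) :
    FormBoundedInCodim G ε U (#S + (k + l)) := by
  refine .of_sdiff ?_
  rw [← Finset.union_sdiff_of_subset h.ssubset.1]
  refine hC.union_of_not_adj hD Finset.disjoint_sdiff fun a ha b hb hab => ?_
  obtain ⟨hbU, hbC⟩ := Finset.mem_sdiff.1 hb
  exact hbC (h.closed a ha b hbU hab)

lemma formBoundedInCodim_one_of_card_eq_four (hε : |ε| ≤ 1) (hU : ¬ HasReducingSeparation G U)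
    (hcard : #U = 4) : FormBoundedInCodim G ε U 1 := by
  obtain ⟨P, hPU, hP, hadj⟩ := exists_card_eq_two_forall_adj hU hcard
  have hQ : #(U \ P) = 2 := by rw [Finset.card_sdiff_of_subset hPU, hP, hcard]
  rw [← Finset.union_sdiff_of_subset hPU]
  exact (formBoundedInCodim_zero_of_card_le_two hε hP.le).union_of_forall_adj
    (formBoundedInCodim_zero_of_card_le_two hε hQ.le) Finset.disjoint_sdiff hadj

end Form

theorem exists_formBoundedInCodim {V : Type} {G : SimpleGraph V} [DecidableRel G.Adj] {ε : ℝ}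
    {U : Finset V} (hε : |ε| ≤ 1) (hK4 : ¬ HasK4Minor G) (hdeg : ∀ v ∈ U, #{u ∈ U | G.Adj v u} ≤ 3)
    (hU : U.Nonempty) :
    ∃ k, 2 * k < #U ∧ FormBoundedInCodim G ε U k := by
  classical
  induction U using Finset.strongInduction with
  | H U ih =>
  replace ih {T : Finset V} (hT : T ⊂ U) (hne : T.Nonempty) :
      ∃ k, 2 * k < #T ∧ FormBoundedInCodim G ε T k :=
    ih T hT (fun v hv => (Finset.card_le_card (Finset.filter_subset_filter _ hT.1)).trans
      (hdeg v (hT.1 hv))) hne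
  by_cases hsmall : #U ≤ 2
  · exact ⟨0, by simpa using hU, formBoundedInCodim_zero_of_card_le_two hε hsmall⟩
  by_cases hodd : Odd #U
  · obtain ⟨v, hv⟩ := hU
    have hcard : #(U \ {v}) + 1 = #U := by
      simpa using Finset.card_sdiff_add_card_eq_card (Finset.singleton_subset_iff.2 hv)
    obtain ⟨k, hk, hbound⟩ := ih
      (Finset.sdiff_ssubset (Finset.singleton_subset_iff.2 hv) (Finset.singleton_nonempty v))
      (Finset.card_pos.1 (by lia))
    exact ⟨#{v} + k, by grind [Finset.card_singleton], hbound.of_sdiff⟩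
  by_cases hred : HasReducingSeparation G U
  · obtain ⟨S, C, hsep, hS⟩ := hred
    obtain ⟨k, hk, hC⟩ := ih (hsep.ssubset.trans_subset Finset.sdiff_subset) hsep.nonempty
    obtain ⟨l, hl, hD⟩ :=
      ih (hsep.symm.ssubset.trans_subset Finset.sdiff_subset) hsep.symm.nonempty
    have hsum := hsep.card_add_card_add_card
    exact ⟨#S + (k + l), by grind, hsep.formBoundedInCodim hC hD⟩
  · have hfour : #U = 4 := by
      by_contra hne
      exact hred (hasReducingSeparation_of_not_hasK4Minor hK4 hdeg (by grind))
    exact ⟨1, by lia, formBoundedInCodim_one_of_card_eq_four hε hred hfour⟩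

section Spectral

lemma exists_ne_zero_forall_dual_eq_zero {K M : Type*} [Field K] [AddCommGroup M] [Module K M]
    {L : Finset (Module.Dual K M)} (hL : #L < Module.finrank K M) :
    ∃ x ≠ 0, ∀ f ∈ L, f x = 0 := by
  have : Module.Finite K M := Module.finite_of_finrank_pos hL.pos
  let F : M →ₗ[K] (L → K) := LinearMap.pi fun f => f.1
  have hF : LinearMap.ker F ≠ ⊥ := LinearMap.ker_ne_bot_of_finrank_lt (by simpa using hL)
  obtain ⟨x, hx, hx0⟩ := Submodule.exists_mem_ne_zero_of_ne_bot hF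
  exact ⟨x, hx0, fun f hf => congrFun (LinearMap.mem_ker.1 hx) ⟨f, hf⟩⟩

variable {n : Type*} [Fintype n] [DecidableEq n] {A : Matrix n n ℝ}

lemma dotProduct_eq_sum_eigenvectorBasis (hA : A.IsHermitian) (x y : n → ℝ) :
    x ⬝ᵥ y = ∑ i, (hA.eigenvectorBasis i ⬝ᵥ x) * (hA.eigenvectorBasis i ⬝ᵥ y) := by
  have h := hA.eigenvectorBasis.sum_inner_mul_inner (WithLp.toLp 2 x) (WithLp.toLp 2 y)
  simp only [EuclideanSpace.inner_eq_star_dotProduct, star_trivial] at h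
  rw [dotProduct_comm x y, ← h]
  simp only [dotProduct_comm y]

lemma dotProduct_mulVec_eq_sum_eigenvalues (hA : A.IsHermitian) (x : n → ℝ) :
    x ⬝ᵥ A *ᵥ x = ∑ i, hA.eigenvalues i * (hA.eigenvectorBasis i ⬝ᵥ x) ^ 2 := by
  rw [dotProduct_eq_sum_eigenvectorBasis hA]
  refine Finset.sum_congr rfl fun i _ => ?_
  have hT : Aᵀ = A := by simpa [IsHermitian, conjTranspose_eq_transpose_of_trivial] using hA
  rw [dotProduct_mulVec, ← mulVec_transpose, hT, hA.mulVec_eigenvectorBasis, smul_dotProduct,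
    smul_eq_mul]
  ring

/-- Were there more such eigenvalues, the span of their eigenvectors would meet the subspace cut out
by `L`. -/
theorem card_lt_mul_eigenvalues_le (hA : A.IsHermitian) {ε c : ℝ}
    {L : Finset (Module.Dual ℝ (n → ℝ))}
    (h : ∀ x, (∀ f ∈ L, f x = 0) → ε * (x ⬝ᵥ A *ᵥ x) ≤ c * (x ⬝ᵥ x)) :
    #{i | c < ε * hA.eigenvalues i} ≤ #L := by
  classical
  by_contra! hlt
  let I : Finset n := {i | c < ε * hA.eigenvalues i}
  let e (i : n) : Module.Dual ℝ (n → ℝ) := dotProductBilin ℝ ℝ (hA.eigenvectorBasis i)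
  obtain ⟨x, hx0, hx⟩ := exists_ne_zero_forall_dual_eq_zero (L := L ∪ Iᶜ.image e) <|
    calc #(L ∪ Iᶜ.image e) ≤ #L + #Iᶜ :=
          (Finset.card_union_le _ _).trans (Nat.add_le_add_left Finset.card_image_le _)
      _ < #I + #Iᶜ := Nat.add_lt_add_right hlt _
      _ = Module.finrank ℝ (n → ℝ) := by
          rw [Finset.card_add_card_compl, Module.finrank_fintype_fun_eq_card]
  have hx_ne {i : n} (hi : hA.eigenvectorBasis i ⬝ᵥ x ≠ 0) : c < ε * hA.eigenvalues i := by
    by_contra hiI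
    have hiI' : i ∈ Iᶜ := by simpa [I] using hiI
    exact hi (hx (e i) (Finset.mem_union_right _ (Finset.mem_image_of_mem e hiI')))
  obtain ⟨i, hi⟩ : ∃ i, hA.eigenvectorBasis i ⬝ᵥ x ≠ 0 := by
    by_contra! hall
    exact hx0 (dotProduct_self_eq_zero.1 (by simp [dotProduct_eq_sum_eigenvectorBasis hA x, hall]))
  have hterm {j : n} (hj : hA.eigenvectorBasis j ⬝ᵥ x ≠ 0) :
      c * ((hA.eigenvectorBasis j ⬝ᵥ x) * (hA.eigenvectorBasis j ⬝ᵥ x)) <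
        ε * (hA.eigenvalues j * (hA.eigenvectorBasis j ⬝ᵥ x) ^ 2) := by
    nlinarith [mul_pos (sub_pos.2 (hx_ne hj)) (sq_pos_of_ne_zero hj)]
  refine (h x fun f hf => hx f (Finset.mem_union_left _ hf)).not_gt ?_
  rw [dotProduct_mulVec_eq_sum_eigenvalues hA, dotProduct_eq_sum_eigenvectorBasis hA x x,
    Finset.mul_sum, Finset.mul_sum]
  refine Finset.sum_lt_sum (fun j _ => ?_) ⟨i, Finset.mem_univ i, hterm hi⟩
  by_cases hj : hA.eigenvectorBasis j ⬝ᵥ x = 0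
  · simp [hj]
  · exact (hterm hj).le

end Spectral

section Eigval

lemma getElem_le_of_countP_lt {α : Type*} [LinearOrder α] {l : List α} (hl : l.SortedLE)
    {j : ℕ} (hj : j < l.length) {c : α} (h : l.countP (c < ·) < l.length - j) : l[j] ≤ c := by
  by_contra! hc
  have hdrop : (l.drop j).countP (c < ·) = (l.drop j).length := by
    refine List.countP_eq_length.2 fun a ha => decide_eq_true ?_
    obtain ⟨i, hi, rfl⟩ := List.mem_drop_iff_getElem.1 ha
    exact hc.trans_le (hl.getElem_le_getElem_of_le (Nat.le_add_right j i))
  have hle := (List.drop_sublist j l).countP_le (p := (c < ·))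
  rw [hdrop, List.length_drop] at hle
  lia

lemma le_getElem_of_countP_le {α : Type*} [LinearOrder α] {l : List α} (hl : l.SortedLE)
    {j : ℕ} (hj : j < l.length) {c : α} (h : l.countP (· < c) ≤ j) : c ≤ l[j] := by
  by_contra! hc
  have htake : (l.take (j + 1)).countP (· < c) = (l.take (j + 1)).length := by
    refine List.countP_eq_length.2 fun a ha => decide_eq_true ?_
    obtain ⟨i, hi, rfl⟩ := List.mem_take_iff_getElem.1 ha
    exact (hl.getElem_le_getElem_of_le (by lia)).trans_lt hc
  have hle := (List.take_sublist (j + 1) l).countP_le (p := (· < c))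
  rw [htake, List.length_take] at hle
  lia

variable {V : Type} [Fintype V] [DecidableEq V] {G : SimpleGraph V} [DecidableRel G.Adj]

lemma length_sort_adjSpectrum : ((adjSpectrum G).sort (· ≤ ·)).length = Fintype.card V := by
  simp [adjSpectrum]

lemma countP_sort_adjSpectrum (p : ℝ → Prop) [DecidablePred p] :
    ((adjSpectrum G).sort (· ≤ ·)).countP p =
      #{i | p ((adjMatrix_isHermitian G).eigenvalues i)} := by
  rw [← Multiset.coe_countP, Multiset.sort_eq, adjSpectrum, Multiset.countP_map]
  rfl

lemma eigval_le_of_card_lt {i : ℕ} {c : ℝ} (hi : i ≤ Fintype.card V)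
    (h : #{j | c < (adjMatrix_isHermitian G).eigenvalues j} < i) : eigval G i ≤ c := by
  have hlen := length_sort_adjSpectrum (G := G)
  rw [eigval, List.getD_eq_getElem _ _ (by lia)]
  refine getElem_le_of_countP_lt (Multiset.pairwise_sort _ _).sortedLE _ ?_
  rw [countP_sort_adjSpectrum (c < ·)]
  lia

lemma le_eigval_of_card_add_le {i : ℕ} {c : ℝ} (hi : 0 < i)
    (h : #{j | (adjMatrix_isHermitian G).eigenvalues j < c} + i ≤ Fintype.card V) :
    c ≤ eigval G i := by
  have hlen := length_sort_adjSpectrum (G := G)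
  rw [eigval, List.getD_eq_getElem _ _ (by lia)]
  refine le_getElem_of_countP_le (Multiset.pairwise_sort _ _).sortedLE _ ?_
  rw [countP_sort_adjSpectrum (· < c)]
  lia

lemma FormBoundedInCodim.card_eigenvalues_le {ε : ℝ} {k : ℕ}
    (h : FormBoundedInCodim G ε Finset.univ k) :
    #{i | 1 < ε * (adjMatrix_isHermitian G).eigenvalues i} ≤ k := by
  obtain ⟨L, hL, hbound⟩ := h
  refine (card_lt_mul_eigenvalues_le (adjMatrix_isHermitian G) fun x hx => ?_).trans hL
  rw [one_mul, dotProduct_mulVec_adjMatrix]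
  simpa [adjForm, dotProduct, sq] using hbound x hx

lemma two_mul_card_eigenvalues_lt [Nonempty V] {ε : ℝ} (hε : |ε| ≤ 1) (hdeg : ∀ v, G.degree v ≤ 3)
    (hK4 : ¬ HasK4Minor G) :
    2 * #{i | 1 < ε * (adjMatrix_isHermitian G).eigenvalues i} < Fintype.card V := by
  have hdeg' : ∀ v ∈ Finset.univ, #{u | G.Adj v u} ≤ 3 := fun v _ => by
    simpa [← SimpleGraph.neighborFinset_eq_filter] using hdeg v
  obtain ⟨k, hk, hbound⟩ := exists_formBoundedInCodim hε hK4 hdeg' Finset.univ_nonempty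
  exact (Nat.mul_le_mul_left 2 hbound.card_eigenvalues_le).trans_lt hk

end Eigval

theorem hl_index_le_one_of_K4_minor_free_subcubic
    {V : Type} [Fintype V] [DecidableEq V]
    (G : SimpleGraph V) [DecidableRel G.Adj]
    (hdeg : ∀ v : V, G.degree v ≤ 3)
    (hK4 : ¬ HasK4Minor G) :
    |eigval G ((Fintype.card V + 1) / 2)| ≤ 1 ∧
    |eigval G ((Fintype.card V + 2) / 2)| ≤ 1 := by
  obtain hV | hV := isEmpty_or_nonempty V
  · simp [eigval, adjSpectrum]
  have hpos := two_mul_card_eigenvalues_lt (ε := 1) (by simp) hdeg hK4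
  have hneg := two_mul_card_eigenvalues_lt (ε := -1) (by simp) hdeg hK4
  simp only [one_mul, neg_one_mul, lt_neg] at hpos hneg
  constructor <;>
    exact abs_le.2 ⟨le_eigval_of_card_add_le (by lia) (by lia),
      eigval_le_of_card_lt (by lia) (by lia)⟩
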